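/- Let H be a real inner product space, B : H → H → ℝ a symmetric bilinear form, and W a finite-dimensional subspace of H with dim W = k such that B(u,u) ≥ 0 for every u ∈ H orthogonal to W. Fix a positive integer N and define Q on the N-fold product H^N by Q(V) = Σ_{i=1}^{N} B(V_i, V_i). Then every finite-dimensional subspace T of H^N on which Q is negative definite (i.e. Q(V) < 0 for every nonzero V ∈ T) satisfies dim T ≤ N·k. -/

import Mathlib

/-!
If each `q i` is nonnegative on `U i`, then `V ↦ ∑ i, q i (V i)` is nonnegative on `∏ i, U i`. A
subspace `T` on which this sum is negative away from `0` therefore meets `∏ i, U i` only in `0`, so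
`T` embeds into the quotient `∏ i, H i ⧸ U i`. For `U i = Wᗮ` each factor is a copy of `W`.
-/

theorem disjoint_of_neg_of_nonneg {R M α : Type*} [Semiring R] [AddCommMonoid M] [Module R M]
    [Preorder α] [Zero α] {q : M → α} {T U : Submodule R M}
    (hT : ∀ v ∈ T, v ≠ 0 → q v < 0) (hU : ∀ u ∈ U, 0 ≤ q u) : Disjoint T U :=
  Submodule.disjoint_def.2 fun v hvT hvU ↦ by_contra fun hv ↦ (hT v hvT hv).not_ge (hU v hvU)

theorem ker_pi_mkQ_comp_proj {ι R : Type*} {M : ι → Type*} [Ring R] [∀ i, AddCommGroup (M i)]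
    [∀ i, Module R (M i)] (U : ∀ i, Submodule R (M i)) :
    (LinearMap.pi fun i ↦ (U i).mkQ ∘ₗ LinearMap.proj i).ker = Submodule.pi Set.univ U := by
  ext V
  simp [funext_iff]

theorem rank_le_sum_rank_quotient_of_disjoint_pi {ι K : Type*} {H : ι → Type*} [Finite ι]
    [DivisionRing K] [∀ i, AddCommGroup (H i)] [∀ i, Module K (H i)]
    {U : ∀ i, Submodule K (H i)} {T : Submodule K (∀ i, H i)}
    (hTU : Disjoint T (Submodule.pi Set.univ U)) :
    Module.rank K T ≤ Cardinal.sum fun i ↦ Module.rank K (H i ⧸ U i) := by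
  rw [← ker_pi_mkQ_comp_proj, ← LinearMap.injective_domRestrict_iff] at hTU
  exact (LinearMap.rank_le_of_injective _ hTU).trans_eq rank_pi

theorem rank_quotient_orthogonal {𝕜 E : Type*} [RCLike 𝕜] [NormedAddCommGroup E]
    [InnerProductSpace 𝕜 E] (W : Submodule 𝕜 E) [W.HasOrthogonalProjection] :
    Module.rank 𝕜 (E ⧸ Wᗮ) = Module.rank 𝕜 W :=
  (Submodule.quotientEquivOfIsCompl Wᗮ W W.isCompl_orthogonal.symm).rank_eq

theorem stmt_1_general {ι K α : Type*} {H : ι → Type*} [Fintype ι] [DivisionRing K]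
    [∀ i, AddCommGroup (H i)] [∀ i, Module K (H i)]
    [AddCommMonoid α] [Preorder α] [AddLeftMono α]
    {q : ∀ i, H i → α} {U : ∀ i, Submodule K (H i)} (hU : ∀ i, ∀ u ∈ U i, 0 ≤ q i u)
    {T : Submodule K (∀ i, H i)} (hT : ∀ V ∈ T, V ≠ 0 → ∑ i, q i (V i) < 0) :
    Module.rank K T ≤ Cardinal.sum fun i ↦ Module.rank K (H i ⧸ U i) :=
  rank_le_sum_rank_quotient_of_disjoint_pi <| disjoint_of_neg_of_nonneg hT fun V hV ↦
    Finset.sum_nonneg fun i _ ↦ hU i (V i) (hV i (Set.mem_univ i))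

/-- Linear-algebraic content of Proposition 1.3 of the paper:
if `B` is a symmetric bilinear form on a real inner product space `H` which is
nonnegative on the orthogonal complement of a `k`-dimensional subspace `W`, and
`Q (V) = ∑ i, B (V i) (V i)` on `H^N`, then any finite-dimensional subspace of `H^N`
on which `Q` is negative definite has dimension at most `N * k`. -/
theorem stmt_1 {H : Type*} [NormedAddCommGroup H] [InnerProductSpace ℝ H]
    (B : H →ₗ[ℝ] H →ₗ[ℝ] ℝ) (hBsymm : ∀ u v : H, B u v = B v u)
    (W : Submodule ℝ H) [FiniteDimensional ℝ W] (k : ℕ)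
    (hk : Module.finrank ℝ W = k)
    (hpos : ∀ u : H, (∀ w ∈ W, (inner ℝ u w : ℝ) = 0) → 0 ≤ B u u)
    (N : ℕ) (hN : 0 < N)
    (T : Submodule ℝ (Fin N → H)) [FiniteDimensional ℝ T]
    (hT : ∀ V ∈ T, V ≠ 0 → (∑ i : Fin N, B (V i) (V i)) < 0) :
    Module.finrank ℝ T ≤ N * k := by
  refine Module.finrank_le_of_rank_le <| (stmt_1_general (q := fun _ u ↦ B u u) (U := fun _ ↦ Wᗮ)
    (fun _ u hu ↦ hpos u fun _ hw ↦ W.inner_left_of_mem_orthogonal hw hu) hT).trans_eq ?_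
  simp [rank_quotient_orthogonal, ← Module.finrank_eq_rank, hk]
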